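/- arXiv:0907.3780 — 4 statements merged into one kernel-verified Lean document; each statement's English description precedes it below -/
import Mathlib

section
/- For all integers ℓ ≥ 2 and k ≥ 1, the polynomial P^ℓ_k has exactly ℓ^{(ℓ^k−1)/(ℓ−1)} distinct monomials; that is, the cardinality of the support of P^ℓ_k equals ℓ raised to the power 1 + ℓ + ℓ^2 + ⋯ + ℓ^{k−1}. -/
/-!
By induction on `k`, the polynomial `P^ℓ_k` is a sum of distinct monomials with coefficient `1`,
all of degree `ℓ ^ k`, in the variables of a single block of length `ℓ ^ (2k)`. In the recursion the
blocks are consecutive and pairwise disjoint, so nothing can cancel or coincide: in a product a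
monomial is determined by its restrictions to the blocks, hence the numbers of monomials multiply
(`IsMonomialSum.mul`); in a sum of polynomials of the same positive degree no monomial is shared,
hence the numbers add (`IsMonomialSum.add`). The count `N_k` thus satisfies `N_0 = 1` and
`N_{k+1} = ℓ * N_k ^ ℓ`, which is solved by `ℓ ^ (1 + ℓ + ⋯ + ℓ ^ (k-1))`.
-/

open MvPolynomial

/-- The polynomial `P^ℓ_k` of the paper, with an offset parameter for the variable
indices (0-based).  `Ppoly ℓ 0 off = x_off`, and
`Ppoly ℓ (k+1) off = ∑_{i<ℓ} ∏_{j<ℓ} Ppoly ℓ k (off + i·ℓ^{2k+1} + j·ℓ^{2k})`,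
so that `Ppoly ℓ k 0` is the polynomial `P^ℓ_k` in the variables `x_0, …, x_{ℓ^{2k}-1}`. -/
noncomputable def Ppoly (ℓ : ℕ) : ℕ → ℕ → MvPolynomial ℕ ℝ
  | 0, off => X off
  | (k+1), off =>
      ∑ i ∈ Finset.range ℓ, ∏ j ∈ Finset.range ℓ,
        Ppoly ℓ k (off + i * ℓ ^ (2*k+1) + j * ℓ ^ (2*k))

/-- `IsMonomialSum p a b d n`: the polynomial `p` is a sum of exactly `n` distinct monomials, each
with coefficient `1`, of total degree `d`, and involving only variables `x_v` with `a ≤ v < b`. -/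
def IsMonomialSum (p : MvPolynomial ℕ ℝ) (a b d n : ℕ) : Prop :=
  ∃ M : Finset (ℕ →₀ ℕ), p = ∑ m ∈ M, monomial m 1 ∧ M.card = n ∧
    ∀ m ∈ M, m.degree = d ∧ ∀ v, m v ≠ 0 → a ≤ v ∧ v < b

lemma IsMonomialSum.card_support {p : MvPolynomial ℕ ℝ} {a b d n : ℕ}
    (h : IsMonomialSum p a b d n) : p.support.card = n := by
  obtain ⟨M, rfl, rfl, -⟩ := h
  congr 1
  ext m
  simp [mem_support_iff, coeff_sum, coeff_monomial]

/-- For variables in disjoint intervals, a product monomial determines both of its factors. -/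
lemma IsMonomialSum.mul {p q : MvPolynomial ℕ ℝ} {a b c d e n m : ℕ} (hab : a ≤ b) (hbc : b ≤ c)
    (hp : IsMonomialSum p a b d n) (hq : IsMonomialSum q b c e m) :
    IsMonomialSum (p * q) a c (d + e) (n * m) := by
  obtain ⟨M, rfl, rfl, hM⟩ := hp
  obtain ⟨N, rfl, rfl, hN⟩ := hq
  have hinj : Set.InjOn (fun x : (ℕ →₀ ℕ) × (ℕ →₀ ℕ) => x.1 + x.2) (M ×ˢ N : Finset _) := by
    rintro ⟨u, v⟩ huv ⟨u', v'⟩ huv' h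
    simp only [Finset.coe_product, Set.mem_prod, Finset.mem_coe] at huv huv' h
    have key : ∀ x, u x = u' x ∧ v x = v' x := by
      intro x
      have hx := DFunLike.congr_fun h x
      simp only [Finsupp.add_apply] at hx
      have h1 := (hM u huv.1).2 x
      have h2 := (hM u' huv'.1).2 x
      have h3 := (hN v huv.2).2 x
      have h4 := (hN v' huv'.2).2 x
      omega
    exact Prod.ext (Finsupp.ext fun x => (key x).1) (Finsupp.ext fun x => (key x).2)
  refine ⟨(M ×ˢ N).image fun x => x.1 + x.2, ?_, ?_, ?_⟩
  · rw [Finset.sum_image hinj, Finset.sum_mul_sum, Finset.sum_product]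
    simp [monomial_mul]
  · rw [Finset.card_image_of_injOn hinj, Finset.card_product]
  · intro w hw
    obtain ⟨⟨u, v⟩, huv, rfl⟩ := Finset.mem_image.1 hw
    rw [Finset.mem_product] at huv
    refine ⟨by simp [map_add, (hM u huv.1).1, (hN v huv.2).1], fun x hx => ?_⟩
    have h1 := (hM u huv.1).2 x
    have h2 := (hN v huv.2).2 x
    simp only [Finsupp.add_apply] at hx
    omega

/-- Positivity of the degree excludes the constant monomial, the only one that polynomials in
disjoint sets of variables can share. -/
lemma IsMonomialSum.add {p q : MvPolynomial ℕ ℝ} {a b c d n m : ℕ} (hab : a ≤ b) (hbc : b ≤ c)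
    (hd : 0 < d) (hp : IsMonomialSum p a b d n) (hq : IsMonomialSum q b c d m) :
    IsMonomialSum (p + q) a c d (n + m) := by
  obtain ⟨M, rfl, rfl, hM⟩ := hp
  obtain ⟨N, rfl, rfl, hN⟩ := hq
  have hdisj : Disjoint M N := by
    rw [Finset.disjoint_left]
    intro u hu hu'
    have hu0 : u = 0 := by
      ext x
      have h1 := (hM u hu).2 x
      have h2 := (hN u hu').2 x
      simp only [Finsupp.coe_zero, Pi.zero_apply]
      omega
    have h := (hM u hu).1
    rw [hu0, map_zero] at h
    omega
  refine ⟨M ∪ N, (Finset.sum_union hdisj).symm, Finset.card_union_of_disjoint hdisj, ?_⟩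
  intro u hu
  rcases Finset.mem_union.1 hu with hu | hu
  · refine ⟨(hM u hu).1, fun x hx => ?_⟩
    have := (hM u hu).2 x hx
    omega
  · refine ⟨(hN u hu).1, fun x hx => ?_⟩
    have := (hN u hu).2 x hx
    omega

lemma isMonomialSum_prod {p : ℕ → MvPolynomial ℕ ℝ} {c B d n : ℕ}
    (h : ∀ j, IsMonomialSum (p j) (c + j * B) (c + j * B + B) d n) (t : ℕ) :
    IsMonomialSum (∏ j ∈ Finset.range t, p j) c (c + t * B) (t * d) (n ^ t) := by
  induction t with
  | zero => exact ⟨{0}, by simp, by simp, by simp⟩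
  | succ t ih =>
    rw [Finset.prod_range_succ, pow_succ, Nat.succ_mul, Nat.succ_mul, ← add_assoc]
    exact ih.mul (by omega) (by omega) (h t)

lemma isMonomialSum_sum {p : ℕ → MvPolynomial ℕ ℝ} {c B d n : ℕ} (hd : 0 < d)
    (h : ∀ j, IsMonomialSum (p j) (c + j * B) (c + j * B + B) d n) (t : ℕ) :
    IsMonomialSum (∑ j ∈ Finset.range t, p j) c (c + t * B) d (t * n) := by
  induction t with
  | zero => exact ⟨∅, by simp, by simp, by simp⟩
  | succ t ih =>
    rw [Finset.sum_range_succ, Nat.succ_mul, Nat.succ_mul, ← add_assoc]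
    exact ih.add (by omega) (by omega) hd (h t)

lemma isMonomialSum_Ppoly {ℓ : ℕ} (hℓ : 0 < ℓ) (k : ℕ) : ∀ off : ℕ,
    IsMonomialSum (Ppoly ℓ k off) off (off + ℓ ^ (2 * k)) (ℓ ^ k)
      (ℓ ^ (∑ i ∈ Finset.range k, ℓ ^ i)) := by
  induction k with
  | zero =>
    intro off
    refine ⟨{Finsupp.single off 1}, by simp [Ppoly, X], by simp, ?_⟩
    intro m hm
    rw [Finset.mem_singleton] at hm
    subst hm
    refine ⟨by simp, fun v hv => ?_⟩
    have : off = v := by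
      by_contra hne
      exact hv (Finsupp.single_eq_of_ne' hne)
    simp only [mul_zero, pow_zero]
    omega
  | succ k ih =>
    intro off
    have hcount : ℓ ^ (∑ i ∈ Finset.range (k + 1), ℓ ^ i)
        = ℓ * (ℓ ^ (∑ i ∈ Finset.range k, ℓ ^ i)) ^ ℓ := by
      rw [Finset.sum_range_succ', ← pow_mul, Finset.sum_mul, pow_zero, pow_succ']
      simp only [pow_succ]
    have hblock : ℓ ^ (2 * (k + 1)) = ℓ * ℓ ^ (2 * k + 1) := by ring
    have hdeg : ℓ ^ (k + 1) = ℓ * ℓ ^ k := by ring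
    rw [hcount, hblock, hdeg, Ppoly]
    refine isMonomialSum_sum (by positivity) (fun i => ?_) ℓ
    have hrow := isMonomialSum_prod
      (fun j => ih (off + i * ℓ ^ (2 * k + 1) + j * ℓ ^ (2 * k))) ℓ
    rwa [← pow_succ' ℓ (2 * k)] at hrow

/-- `P^ℓ_k` has exactly `ℓ^{(ℓ^k-1)/(ℓ-1)} = ℓ^{1 + ℓ + ℓ² + ⋯ + ℓ^{k-1}}`
distinct monomials. -/
theorem stmt1 (ℓ k : ℕ) (hℓ : 2 ≤ ℓ) (hk : 1 ≤ k) :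
    (Ppoly ℓ k 0).support.card = ℓ ^ (∑ i ∈ Finset.range k, ℓ ^ i) := by
  exact (isMonomialSum_Ppoly (by omega) k 0).card_support
end

section
/- Let f ∈ ℝ[x_1,…,x_n] be homogeneous of total degree d ≥ 1 with all coefficients nonnegative, and suppose f = Σ_{i=1}^ℓ P_i where each P_i has all coefficients nonnegative and var(P_i) ∩ var(P_j) = ∅ for all i ≠ j. Let p ∈ ℝ[x_1,…,x_n] be a nonconstant polynomial with all coefficients nonnegative and total degree strictly less than d, and suppose there exists a monomial m such that every monomial in the support of m·p lies in the support of f. Then there is exactly one index i ∈ {1,…,ℓ} such that var(p) ⊆ var(P_i). -/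
open MvPolynomial

/-!
Since `deg p < d` and `f` is homogeneous of degree `d`, the multiplier `m` contains some
variable `v`. Every monomial `m·b` of `m·p` lies in the support of some `P j`, and then
`v ∈ var(P j)`. The variable sets are disjoint, so the same index `i` serves for all `b`, which
gives `var(p) ⊆ var(P i)`. As `p` is nonconstant, `var(p)` is nonempty, and disjointness makes
`i` unique.
-/

/-- Lemma (degree-< d gate case): if `f = ∑ i P i` is a nonneg homogeneous polynomial of
degree `d ≥ 1` with the `P i` on pairwise disjoint variable sets, `p` is a nonconstant
nonneg polynomial of total degree `< d`, and some monomial multiple `m·p` has all its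
monomials in the support of `f`, then `var(p) ⊆ var(P i)` for exactly one `i`. -/
theorem stmt2 (n ℓ d : ℕ) (hd : 1 ≤ d)
    (f : MvPolynomial (Fin n) ℝ) (P : Fin ℓ → MvPolynomial (Fin n) ℝ)
    (hfhom : f.IsHomogeneous d)
    (hfpos : ∀ m, 0 ≤ f.coeff m)
    (hsum : f = ∑ i, P i)
    (hPpos : ∀ i m, 0 ≤ (P i).coeff m)
    (hdisj : ∀ i j, i ≠ j → Disjoint (P i).vars (P j).vars)
    (p : MvPolynomial (Fin n) ℝ)
    (hppos : ∀ m, 0 ≤ p.coeff m)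
    (hpnc : 0 < p.totalDegree)
    (hpdeg : p.totalDegree < d)
    (hm : ∃ m : Fin n →₀ ℕ, ((monomial m (1:ℝ)) * p).support ⊆ f.support) :
    ∃! i : Fin ℓ, p.vars ⊆ (P i).vars := by
  obtain ⟨m, hm⟩ := hm
  -- Each monomial of `m·p` occurs in one of the summands.
  have key : ∀ b ∈ p.support, m + b ∈ f.support ∧ ∃ j, m + b ∈ (P j).support := by
    intro b hb
    have hmb : m + b ∈ f.support := by
      apply hm
      rw [mem_support_iff, coeff_monomial_mul, one_mul]
      exact mem_support_iff.mp hb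
    refine ⟨hmb, ?_⟩
    rw [mem_support_iff, hsum, coeff_sum] at hmb
    obtain ⟨j, -, hj⟩ := Finset.exists_ne_zero_of_sum_ne_zero hmb
    exact ⟨j, mem_support_iff.mpr hj⟩
  have hp0 : p ≠ 0 := by
    rintro rfl
    simp at hpnc
  obtain ⟨a, ha⟩ := support_nonempty.mpr hp0
  have hm0 : m ≠ 0 := by
    rintro rfl
    have h := (key a ha).1
    rw [zero_add] at h
    have h1 : a.degree = d := by
      have h2 := hfhom (mem_support_iff.mp h)
      rwa [Finsupp.degree_eq_weight_one]
    have h3 : a.degree ≤ p.totalDegree := le_totalDegree ha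
    omega
  obtain ⟨v, hv⟩ := Finsupp.support_nonempty_iff.mpr hm0
  have hmem : ∀ b j, m + b ∈ (P j).support → v ∈ (P j).vars := by
    intro b j h
    refine (mem_vars v).mpr ⟨m + b, h, ?_⟩
    have := Finsupp.mem_support_iff.mp hv
    rw [Finsupp.mem_support_iff, Finsupp.add_apply]
    omega
  obtain ⟨-, i, hi⟩ := key a ha
  have hsub : p.vars ⊆ (P i).vars := by
    intro w hw
    obtain ⟨b, hb, hwb⟩ := (mem_vars w).mp hw
    obtain ⟨-, j, hj⟩ := key b hb
    have hij : i = j := by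
      by_contra hne
      exact Finset.disjoint_left.mp (hdisj i j hne) (hmem a i hi) (hmem b j hj)
    subst hij
    refine (mem_vars w).mpr ⟨m + b, hj, ?_⟩
    have := Finsupp.mem_support_iff.mp hwb
    rw [Finsupp.mem_support_iff, Finsupp.add_apply]
    omega
  obtain ⟨w, hw⟩ : p.vars.Nonempty := by
    rw [Finset.nonempty_iff_ne_empty]
    intro h
    rw [vars_eq_empty_iff_eq_C] at h
    rw [h, totalDegree_C] at hpnc
    exact lt_irrefl _ hpnc
  refine ⟨i, hsub, fun j hj => ?_⟩
  by_contra hne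
  exact Finset.disjoint_left.mp (hdisj j i hne) (hj hw) (hsub hw)
end

section
/- Let f ∈ ℝ[x_1,…,x_n] be homogeneous of total degree d ≥ 1 with all coefficients nonnegative, and suppose f = Σ_{i=1}^ℓ P_i where each P_i has all coefficients nonnegative and var(P_i) ∩ var(P_j) = ∅ for all i ≠ j. Let p_1, p_2 ∈ ℝ[x_1,…,x_n] be nonconstant polynomials with all coefficients nonnegative, each of total degree strictly less than d, and suppose every monomial in the support of the product p_1·p_2 lies in the support of f. Then there is exactly one index i ∈ {1,…,ℓ} such that var(p_1·p_2) ⊆ var(P_i). -/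
/-!
Nonnegativity rules out cancellation, so `a + b` is a monomial of `p₁ * p₂`, hence of `f`, hence of
some `P i`, whenever `a` and `b` are monomials of `p₁` and `p₂`. As `a + b` has degree `d` while
`p₁` and `p₂` have degree less than `d`, neither `a` nor `b` is the trivial monomial. Fix `a₀`,
`b₀` and the index `i` with `a₀ + b₀` in the support of `P i`. The variables of `a₀` determine `i`
by disjointness, so `a₀ + b` lies in `P i` for every `b`; symmetrically `a + b₀` lies in `P i` for
every `a`. Thus all variables of `p₁` and `p₂` belong to `P i`. Uniqueness holds because
`p₁ * p₂` involves at least one variable.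
-/

open MvPolynomial

/-- Nonnegative coefficients cannot cancel in a product. -/
lemma add_mem_support_mul_of_nonneg {σ : Type*} {p q : MvPolynomial σ ℝ}
    (hp : ∀ m, 0 ≤ p.coeff m) (hq : ∀ m, 0 ≤ q.coeff m) {a b : σ →₀ ℕ}
    (ha : a ∈ p.support) (hb : b ∈ q.support) : a + b ∈ (p * q).support := by
  classical
  rw [mem_support_iff] at *
  rw [coeff_mul]
  refine ne_of_gt (lt_of_lt_of_le (mul_pos ((hp a).lt_of_ne' ha) ((hq b).lt_of_ne' hb)) ?_)
  exact Finset.single_le_sum (f := fun x : (σ →₀ ℕ) × (σ →₀ ℕ) => p.coeff x.1 * q.coeff x.2)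
    (fun x _ => mul_nonneg (hp _) (hq _))
    (Finset.HasAntidiagonal.mem_antidiagonal.2 (rfl : (a, b).1 + (a, b).2 = a + b))

/-- If `a + b` has degree exceeding that of `q`, and `b` is a monomial of `q`, then some variable
occurs in `a`. -/
lemma exists_mem_support_of_degree_add {σ : Type*} {q : MvPolynomial σ ℝ} {a b : σ →₀ ℕ} {d : ℕ}
    (hb : b ∈ q.support) (hq : q.totalDegree < d) (h : (a + b).degree = d) :
    ∃ x, x ∈ a.support := by
  by_contra! hx
  have ha : a = 0 := Finsupp.support_eq_empty.1 (Finset.eq_empty_of_forall_notMem hx)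
  have hle : b.degree ≤ q.totalDegree := le_totalDegree hb
  rw [ha, zero_add] at h
  omega

/-- Lemma (product gate case): if `f = ∑ i P i` is a nonneg homogeneous polynomial of
degree `d ≥ 1` with the `P i` on pairwise disjoint variable sets, and `p₁, p₂` are
nonconstant nonneg polynomials of total degree `< d` whose product has all its monomials
in the support of `f`, then `var(p₁·p₂) ⊆ var(P i)` for exactly one `i`. -/
theorem stmt3 (n ℓ d : ℕ) (hd : 1 ≤ d)
    (f : MvPolynomial (Fin n) ℝ) (P : Fin ℓ → MvPolynomial (Fin n) ℝ)
    (hfhom : f.IsHomogeneous d)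
    (hfpos : ∀ m, 0 ≤ f.coeff m)
    (hsum : f = ∑ i, P i)
    (hPpos : ∀ i m, 0 ≤ (P i).coeff m)
    (hdisj : ∀ i j, i ≠ j → Disjoint (P i).vars (P j).vars)
    (p₁ p₂ : MvPolynomial (Fin n) ℝ)
    (hp₁pos : ∀ m, 0 ≤ p₁.coeff m) (hp₂pos : ∀ m, 0 ≤ p₂.coeff m)
    (hp₁nc : 0 < p₁.totalDegree) (hp₂nc : 0 < p₂.totalDegree)
    (hp₁deg : p₁.totalDegree < d) (hp₂deg : p₂.totalDegree < d)
    (hsupp : (p₁ * p₂).support ⊆ f.support) :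
    ∃! i : Fin ℓ, (p₁ * p₂).vars ⊆ (P i).vars := by
  classical
  have key : ∀ a ∈ p₁.support, ∀ b ∈ p₂.support,
      (∃ i, a + b ∈ (P i).support) ∧ (∃ x, x ∈ a.support) ∧ ∃ x, x ∈ b.support := by
    intro a ha b hb
    have hf := hsupp (add_mem_support_mul_of_nonneg hp₁pos hp₂pos ha hb)
    have hdeg : (a + b).degree = d := by
      rw [Finsupp.degree_eq_weight_one]
      exact hfhom (mem_support_iff.1 hf)
    refine ⟨?_, exists_mem_support_of_degree_add hb hp₂deg hdeg,
      exists_mem_support_of_degree_add ha hp₁deg (by rwa [add_comm])⟩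
    rw [hsum] at hf
    simpa using support_sum hf
  have mem_left : ∀ {i} {a b : Fin n →₀ ℕ} {x}, a + b ∈ (P i).support → x ∈ a.support →
      x ∈ (P i).vars := by
    intro i a b x h hx
    refine (mem_vars_iff_mem_support _).2 ⟨_, h, ?_⟩
    simp only [Finsupp.mem_support_iff, Finsupp.add_apply] at hx ⊢
    omega
  have mem_right : ∀ {i} {a b : Fin n →₀ ℕ} {x}, a + b ∈ (P i).support → x ∈ b.support →
      x ∈ (P i).vars := fun {i a b x} h hx => mem_left (add_comm a b ▸ h) hx
  have index_eq : ∀ {i j x}, x ∈ (P i).vars → x ∈ (P j).vars → i = j := by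
    intro i j x hi hj
    by_contra hij
    exact Finset.disjoint_left.1 (hdisj i j hij) hi hj
  have nonempty : ∀ {p : MvPolynomial (Fin n) ℝ}, 0 < p.totalDegree → ∃ a, a ∈ p.support := by
    intro p hp
    by_contra! h
    rw [support_eq_empty.1 (Finset.eq_empty_of_forall_notMem h), totalDegree_zero] at hp
    exact lt_irrefl _ hp
  obtain ⟨a₀, ha₀⟩ := nonempty hp₁nc
  obtain ⟨b₀, hb₀⟩ := nonempty hp₂nc
  obtain ⟨⟨i, hi⟩, ⟨x, hx⟩, ⟨y, hy⟩⟩ := key a₀ ha₀ b₀ hb₀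
  refine ⟨i, fun z hz => ?_, fun j hj => ?_⟩
  · rcases Finset.mem_union.1 (vars_mul p₁ p₂ hz) with hz | hz
    · obtain ⟨a, ha, hza⟩ := (mem_vars_iff_mem_support _).1 hz
      obtain ⟨⟨j, hj⟩, -⟩ := key a ha b₀ hb₀
      obtain rfl := index_eq (mem_right hi hy) (mem_right hj hy)
      exact mem_left hj hza
    · obtain ⟨b, hb, hzb⟩ := (mem_vars_iff_mem_support _).1 hz
      obtain ⟨⟨j, hj⟩, -⟩ := key a₀ ha₀ b hb
      obtain rfl := index_eq (mem_left hi hx) (mem_left hj hx)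
      exact mem_right hj hzb
  · refine index_eq (hj ((mem_vars_iff_mem_support _).2
      ⟨_, add_mem_support_mul_of_nonneg hp₁pos hp₂pos ha₀ hb₀, ?_⟩)) (mem_left hi hx)
    simp only [Finsupp.mem_support_iff, Finsupp.add_apply] at hx ⊢
    omega
end

section
/- Let F be a field, let P ∈ F[x_1,…,x_n, y] with deg_y(P) = r, and write P(x̄, y) = Σ_{i=0}^r C_i(x̄)·y^i with C_i ∈ F[x_1,…,x_n]. Suppose f ∈ F[x_1,…,x_n] satisfies P(x̄, f(x̄)) = 0 (as a polynomial identity) and (∂P/∂y)(0̄, f(0̄)) = ξ ≠ 0, where 0̄ denotes the all-zeros point and f(0̄) is the constant term of f. Then for each integer k ≥ 0 there exists a polynomial Q_k ∈ F[y_0, y_1, …, y_r] such that H_{≤k}(f) = H_{≤k}(Q_k(C_0, C_1, …, C_r)), where Q_k(C_0,…,C_r) denotes substitution of the polynomial C_i for the variable y_i. -/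
/-!
The proof is Newton iteration with a fixed slope. Let `I` be the ideal of polynomials vanishing at
the origin and `A` the subalgebra generated by the coefficients of `P`. Starting from the constant
`f(0) ∈ A`, the step `g ↦ g - ξ⁻¹ P(g)` stays in `A`, and by Taylor expansion of `P` at its root
`f` it improves `f - g ∈ I ^ (k + 1)` to `I ^ (k + 2)` (`newton_step`), because `ξ⁻¹ P'(f) - 1`
vanishes at the origin. Finally, congruence modulo `I ^ (k + 1)` means equality of truncations in
degree at most `k` (`Hle_eq_of_sub_mem`).
-/

/-- `Hle k g = H_{≤k}(g)`, the truncation of `g` to total degree at most `k`. -/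
noncomputable def Hle {σ F : Type*} [CommSemiring F] (k : ℕ)
    (g : MvPolynomial σ F) : MvPolynomial σ F :=
  ∑ i ∈ Finset.range (k+1), MvPolynomial.homogeneousComponent i g

open MvPolynomial in
theorem mem_idealOfVars_iff_eval_zero {σ F : Type*} [CommRing F] (p : MvPolynomial σ F) :
    p ∈ idealOfVars σ F ↔ eval (fun _ => (0 : F)) p = 0 := by
  have h := mem_pow_idealOfVars_iff' 1 p
  have h0 : eval (fun _ => (0 : F)) p = p.coeff 0 := by
    change eval (0 : σ → F) p = _
    rw [eval_zero, constantCoeff_eq]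
  rw [pow_one] at h
  rw [h, h0]
  constructor
  · intro h
    exact h 0 (by simp)
  · intro h x hx
    rw [Nat.lt_one_iff, Finsupp.degree_eq_zero_iff] at hx
    rw [hx, h]

open MvPolynomial in
theorem Hle_eq_of_sub_mem {σ F : Type*} [CommRing F] (k : ℕ) (f g : MvPolynomial σ F)
    (h : f - g ∈ idealOfVars σ F ^ (k + 1)) : Hle k f = Hle k g := by
  rw [mem_pow_idealOfVars_iff'] at h
  refine Finset.sum_congr rfl fun i hi => ?_
  ext d
  rw [coeff_homogeneousComponent, coeff_homogeneousComponent]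
  split_ifs with hd
  · have := h d (by rw [hd]; exact Finset.mem_range.mp hi)
    rwa [coeff_sub, sub_eq_zero] at this
  · rfl

/-- One step of Newton iteration with the fixed slope inverse `u` gains one power of `I`, provided
`u` inverts `P'(f)` modulo `I`. -/
theorem newton_step {R : Type*} [CommRing R] (I : Ideal R) (P : Polynomial R) (f g u : R) (k : ℕ)
    (hroot : P.eval f = 0) (hu : u * P.derivative.eval f - 1 ∈ I) (h : f - g ∈ I ^ (k + 1)) :
    f - (g - u * P.eval g) ∈ I ^ (k + 2) := by
  obtain ⟨c, hc⟩ := P.binomExpansion f (g - f)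
  rw [add_sub_cancel, hroot, zero_add] at hc
  have hI : f - g ∈ I := Ideal.pow_le_self (Nat.succ_ne_zero k) h
  have key : f - (g - u * P.eval g)
      = (f - g) * (u * c * (f - g) - (u * P.derivative.eval f - 1)) := by
    rw [hc]; ring
  rw [key, pow_succ]
  exact Ideal.mul_mem_mul h (I.sub_mem (I.mul_mem_left _ hI) hu)

/-- Lemma 3.2 of Dvir–Shpilka–Yehudayoff: if `P(x̄, y) = ∑_{i=0}^r C_i(x̄)·y^i` has
`deg_y P = r`, `P(x̄, f(x̄)) = 0`, and `(∂P/∂y)(0̄, f(0̄)) = ξ ≠ 0`, then for each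
`k ≥ 0` there is `Q_k ∈ F[y_0, …, y_r]` with `H_{≤k}(f) = H_{≤k}(Q_k(C_0, …, C_r))`. -/
theorem stmt7 (F : Type*) [Field F] (n r : ℕ)
    (P : Polynomial (MvPolynomial (Fin n) F)) (hdeg : P.natDegree = r)
    (f : MvPolynomial (Fin n) F)
    (hroot : Polynomial.eval f P = 0)
    (hderiv : Polynomial.eval (MvPolynomial.eval (fun _ => (0:F)) f)
        (Polynomial.map (MvPolynomial.eval fun _ => (0:F)) (Polynomial.derivative P)) ≠ 0) :
    ∀ k : ℕ, ∃ Q : MvPolynomial (Fin (r+1)) F,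
      Hle k f = Hle k (MvPolynomial.aeval (fun i : Fin (r+1) => P.coeff (i : ℕ)) Q) := by
  set φ : MvPolynomial (Fin (r+1)) F →ₐ[F] MvPolynomial (Fin n) F :=
    MvPolynomial.aeval (fun i : Fin (r+1) => P.coeff (i : ℕ)) with hφ
  rw [Polynomial.eval_map_apply] at hderiv
  set ξ := MvPolynomial.eval (fun _ => (0:F)) (P.derivative.eval f) with hξ
  have hu : MvPolynomial.C ξ⁻¹ * P.derivative.eval f - 1 ∈ MvPolynomial.idealOfVars (Fin n) F := by
    rw [mem_idealOfVars_iff_eval_zero, map_sub, map_mul, MvPolynomial.eval_C, map_one, ← hξ,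
      inv_mul_cancel₀ hderiv, sub_self]
  suffices H : ∀ k : ℕ, ∃ Q, f - φ Q ∈ MvPolynomial.idealOfVars (Fin n) F ^ (k + 1) from
    fun k => (H k).imp fun Q hQ => Hle_eq_of_sub_mem k _ _ hQ
  intro k
  induction k with
  | zero =>
    refine ⟨MvPolynomial.C (MvPolynomial.eval (fun _ => (0:F)) f), ?_⟩
    rw [zero_add, pow_one, mem_idealOfVars_iff_eval_zero, hφ, MvPolynomial.aeval_C]
    simp [MvPolynomial.algebraMap_eq]
  | succ k ih =>
    obtain ⟨Q, hQ⟩ := ih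
    -- `P(φ Q)` is again a polynomial expression in the coefficients of `P`.
    have hP : φ (∑ i : Fin (r+1), MvPolynomial.X i * Q ^ (i : ℕ)) = P.eval (φ Q) := by
      rw [Polynomial.eval_eq_sum_range, hdeg, Finset.sum_range]
      simp [hφ]
    refine ⟨Q - MvPolynomial.C ξ⁻¹ * ∑ i : Fin (r+1), MvPolynomial.X i * Q ^ (i : ℕ), ?_⟩
    have hC : φ (MvPolynomial.C ξ⁻¹) = MvPolynomial.C ξ⁻¹ := φ.commutes ξ⁻¹
    rw [map_sub, map_mul, hP, hC]
    exact newton_step _ P f (φ Q) _ k hroot hu hQ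
end
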